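/- Let $s \in (0,1)$ and $C \geq 1$ be such that every positive harmonic function on the upper half-plane $\mathbb{H}^2 = \{(x_1,x_2) \in \mathbb{R}^2 : x_2 > 0\}$ satisfies the $(s, C)$-Harnack inequality in $\mathbb{H}^2$. Then for all $x, y \in \mathbb{H}^2$ the Harnack metric satisfies $h_{\mathbb{H}^2}(x,y) \leq \left(1 + \frac{\rho_{\mathbb{H}^2}(x,y)}{\log((1+s)/(1-s))}\right) \log C$, where $\rho_{\mathbb{H}^2}$ is the hyperbolic distance of the upper half-plane, determined by $\cosh \rho_{\mathbb{H}^2}(x,y) = 1 + \frac{|x-y|^2}{2 x_2 y_2}$. -/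

import Mathlib

open Metric Set

/-- `u` is harmonic on `G ⊆ ℝ²`: it is twice continuously differentiable on `G` and satisfies
the Laplace equation `∂²u/∂x₁² + ∂²u/∂x₂² = 0` on `G`. -/
def IsHarmonicOn (u : EuclideanSpace ℝ (Fin 2) → ℝ) (G : Set (EuclideanSpace ℝ (Fin 2))) :
    Prop :=
  ContDiffOn ℝ 2 u G ∧ ∀ x ∈ G,
    ∑ i : Fin 2, iteratedFDeriv ℝ 2 u x
      ![EuclideanSpace.single i 1, EuclideanSpace.single i 1] = 0

/-- `u` satisfies the `(s, C)`-Harnack inequality in `G`. -/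
def SatisfiesHarnack (u : EuclideanSpace ℝ (Fin 2) → ℝ) (G : Set (EuclideanSpace ℝ (Fin 2)))
    (s C : ℝ) : Prop :=
  ∀ x ∈ G, ∀ r > (0 : ℝ), ball x r ⊆ G →
    ∀ z₁ ∈ closedBall x (s * r), ∀ z₂ ∈ closedBall x (s * r), u z₁ ≤ C * u z₂

/-- The Harnack metric on a domain `G`: `h_G(x,y) = sup |log(u(x)/u(y))|`, the supremum being
taken over all positive harmonic functions `u` on `G`. -/
noncomputable def harnackMetric (G : Set (EuclideanSpace ℝ (Fin 2)))
    (x y : EuclideanSpace ℝ (Fin 2)) : ℝ :=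
  sSup {t : ℝ | ∃ u : EuclideanSpace ℝ (Fin 2) → ℝ,
    (∀ z ∈ G, 0 < u z) ∧ IsHarmonicOn u G ∧ t = |Real.log (u x / u y)|}

/-- The inverse hyperbolic cosine, `arcosh t = log (t + √(t² - 1))`. -/
noncomputable def arcosh (t : ℝ) : ℝ := Real.log (t + Real.sqrt (t ^ 2 - 1))

/-- The upper half-plane `ℍ² = {(x₁,x₂) ∈ ℝ² : x₂ > 0}`. -/
def upperHalfPlane2 : Set (EuclideanSpace ℝ (Fin 2)) := {x | 0 < x 1}

/-- The hyperbolic distance of the upper half-plane, determined by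
`cosh ρ(x,y) = 1 + |x-y|²/(2 x₂ y₂)`. -/
noncomputable def rhoH (x y : EuclideanSpace ℝ (Fin 2)) : ℝ :=
  arcosh (1 + ‖x - y‖ ^ 2 / (2 * x 1 * y 1))


lemma hyp_id (d t t' : ℝ) :
    Real.sinh (d - t) * Real.sinh (d - t') + Real.sinh t * Real.sinh t'
      + Real.cosh d * (Real.sinh (d - t) * Real.sinh t' + Real.sinh (d - t') * Real.sinh t)
      = Real.sinh d ^ 2 * Real.cosh (t - t') := by
  rw [Real.sinh_sub, Real.sinh_sub, Real.cosh_sub]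
  linear_combination (-(Real.sinh t * Real.sinh t')) * Real.cosh_sq d

lemma geod (x₁ x₂ y₁ y₂ d : ℝ) (hx : 0 < x₂) (hy : 0 < y₂) (hd : 0 < d)
    (hc : (x₁ - y₁) ^ 2 + x₂ ^ 2 + y₂ ^ 2 = 2 * x₂ * y₂ * Real.cosh d) :
    ∃ p q : ℝ → ℝ, p 0 = x₁ ∧ q 0 = x₂ ∧ p d = y₁ ∧ q d = y₂ ∧
      (∀ t ∈ Icc 0 d, 0 < q t) ∧ ∀ t ∈ Icc 0 d, ∀ t' ∈ Icc 0 d,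
        (p t - p t') ^ 2 + q t ^ 2 + q t' ^ 2 = 2 * q t * q t' * Real.cosh (t - t') := by
  have hS : 0 < Real.sinh d := Real.sinh_pos_iff.2 hd
  have hid := hyp_id d
  set S := Real.sinh d with hSdef
  obtain ⟨α, hα⟩ : ∃ α : ℝ → ℝ, ∀ t, α t = Real.sinh (d - t) / S := ⟨_, fun _ => rfl⟩
  obtain ⟨β, hβ⟩ : ∃ β : ℝ → ℝ, ∀ t, β t = Real.sinh t / S := ⟨_, fun _ => rfl⟩
  have key : ∀ t t', α t * α t' + β t * β t' + Real.cosh d * (α t * β t' + α t' * β t)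
      = Real.cosh (t - t') := by
    intro t t'
    have := hid t t'
    rw [hα, hα, hβ, hβ]
    field_simp
    linarith
  obtain ⟨a, ha⟩ : ∃ a : ℝ → ℝ, ∀ t, a t = α t / x₂ + β t / y₂ := ⟨_, fun _ => rfl⟩
  obtain ⟨b, hb⟩ : ∃ a : ℝ → ℝ, ∀ t, a t = α t * x₁ / x₂ + β t * y₁ / y₂ := ⟨_, fun _ => rfl⟩
  obtain ⟨c, hcc⟩ : ∃ a : ℝ → ℝ, ∀ t, a t = α t * (x₁ ^ 2 + x₂ ^ 2) / x₂
    + β t * (y₁ ^ 2 + y₂ ^ 2) / y₂ := ⟨_, fun _ => rfl⟩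
  have hch : Real.cosh d = ((x₁ - y₁) ^ 2 + x₂ ^ 2 + y₂ ^ 2) / (2 * x₂ * y₂) := by
    rw [hc]; field_simp
  have key2 : ∀ t t', a t * c t' + a t' * c t - 2 * b t * b t' = 2 * Real.cosh (t - t') := by
    intro t t'
    rw [← key t t', ha, ha, hb, hb, hcc, hcc, hch]
    field_simp
    ring
  have key3 : ∀ t, a t * c t = 1 + b t ^ 2 := by
    intro t
    have := key2 t t
    simp only [sub_self, Real.cosh_zero] at this
    linarith
  have hapos : ∀ t ∈ Icc 0 d, 0 < a t := by
    intro t ht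
    have h1 : 0 ≤ α t := by
      rw [hα]; exact div_nonneg (Real.sinh_nonneg_iff.2 (by linarith [ht.2])) hS.le
    have h2 : 0 ≤ β t := by
      rw [hβ]; exact div_nonneg (Real.sinh_nonneg_iff.2 ht.1) hS.le
    have h3 : 0 ≤ a t := by rw [ha]; positivity
    refine lt_of_le_of_ne h3 fun h => ?_
    have := key3 t
    rw [← h] at this
    nlinarith [sq_nonneg (b t)]
  have α0 : α 0 = 1 := by rw [hα, sub_zero]; exact div_self hS.ne'
  have αd : α d = 0 := by rw [hα]; simp
  have β0 : β 0 = 0 := by rw [hβ]; simp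
  have βd : β d = 1 := by rw [hβ]; exact div_self hS.ne'
  refine ⟨fun t => b t / a t, fun t => 1 / a t, ?_, ?_, ?_, ?_, ?_, ?_⟩
  · simp only [ha, hb, α0, β0]; field_simp; try simp
  · simp only [ha, α0, β0]; field_simp; try simp
  · simp only [ha, hb, αd, βd]; field_simp; simp [mul_comm]
  · simp only [ha, αd, βd]; field_simp; try simp
  · intro t ht; exact one_div_pos.2 (hapos t ht)
  · intro t ht t' ht'
    have h1 := hapos t ht
    have h2 := hapos t' ht'
    have h3 := key3 t
    have h4 := key3 t'
    have h5 := key2 t t'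
    simp only
    field_simp
    linear_combination (a t * a t') * h5 - (a t')^2 * h3 - (a t)^2 * h4

lemma ball_subH (c : EuclideanSpace ℝ (Fin 2)) : ball c (c 1) ⊆ upperHalfPlane2 := by
  intro z hz
  rw [mem_ball, dist_eq_norm] at hz
  have h := (PiLp.norm_apply_le (z - c) 1).trans_lt hz
  simp only [PiLp.sub_apply, Real.norm_eq_abs] at h
  have := (abs_lt.1 h).1
  show 0 < z 1
  linarith

lemma cosh_half (s : ℝ) (hs : s ∈ Ioo (0 : ℝ) 1) :
    Real.cosh (Real.log ((1 + s) / (1 - s)) / 2) ^ 2 * (1 - s ^ 2) = 1 := by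
  have h1 : 0 < 1 + s := by linarith [hs.1]
  have h2 : 0 < 1 - s := by linarith [hs.2]
  have h := Real.cosh_two_mul (Real.log ((1 + s) / (1 - s)) / 2)
  rw [Real.sinh_sq, mul_div_cancel₀ _ two_ne_zero, Real.cosh_log (by positivity)] at h
  field_simp at h
  nlinarith

lemma mem_cb (s : ℝ) (hs : s ∈ Ioo (0 : ℝ) 1) (k p q p' q' : ℝ) (hq : 0 < q) (hq' : 0 < q')
    (hk : k ^ 2 * (1 - s ^ 2) = 1) (hk0 : 0 < k)
    (h : (p - p') ^ 2 + q ^ 2 + q' ^ 2 ≤ 2 * q * q' * k) :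
    (!₂[p, q] : EuclideanSpace ℝ (Fin 2)) ∈ closedBall !₂[p', q' * k] (s * (q' * k)) := by
  have hs0 := hs.1
  rw [mem_closedBall, EuclideanSpace.dist_eq]
  refine Real.sqrt_le_iff.2 ⟨by positivity, ?_⟩
  simp only [Fin.sum_univ_two, Real.dist_eq, sq_abs]
  simp
  nlinarith

lemma stepH (s C : ℝ) (hs : s ∈ Ioo (0 : ℝ) 1)
    (u : EuclideanSpace ℝ (Fin 2) → ℝ) (hu : SatisfiesHarnack u upperHalfPlane2 s C)
    (d : ℝ) (p q : ℝ → ℝ) (hq : ∀ t ∈ Icc 0 d, 0 < q t)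
    (hpq : ∀ t ∈ Icc 0 d, ∀ t' ∈ Icc 0 d,
        (p t - p t') ^ 2 + q t ^ 2 + q t' ^ 2 = 2 * q t * q t' * Real.cosh (t - t'))
    (t t' : ℝ) (ht : t ∈ Icc 0 d) (ht' : t' ∈ Icc 0 d)
    (h : |t - t'| ≤ Real.log ((1 + s) / (1 - s))) :
    u !₂[p t, q t] ≤ C * u !₂[p t', q t'] := by
  have hk := cosh_half s hs
  have hk0 := Real.cosh_pos (Real.log ((1 + s) / (1 - s)) / 2)
  set L := Real.log ((1 + s) / (1 - s)) with hL
  set k := Real.cosh (L / 2) with hkd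
  obtain ⟨m, hm⟩ : ∃ m, m = (t + t') / 2 := ⟨_, rfl⟩
  have hmI : m ∈ Icc 0 d := ⟨by linarith [ht.1, ht'.1], by linarith [ht.2, ht'.2]⟩
  have hqm := hq m hmI
  have hL0 : 0 ≤ L := (abs_nonneg _).trans h
  have habs := abs_le.1 h
  have main : ∀ r ∈ Icc 0 d, |r - m| ≤ L / 2 → (!₂[p r, q r] : EuclideanSpace ℝ (Fin 2)) ∈
      closedBall !₂[p m, q m * k] (s * (q m * k)) := by
    intro r hr hrm
    refine mem_cb s hs k _ _ _ _ (hq r hr) hqm hk hk0 ?_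
    rw [hpq r hr m hmI]
    have := hq r hr
    have : Real.cosh (r - m) ≤ k := by
      rw [hkd, Real.cosh_le_cosh, abs_of_nonneg (by linarith : 0 ≤ L / 2)]; exact hrm
    gcongr
  have hpos : 0 < q m * k := by positivity
  refine hu !₂[p m, q m * k] (by simpa [upperHalfPlane2] using hpos) (q m * k) hpos ?_ _
    (main t ht ?_) _ (main t' ht' ?_)
  · simpa using ball_subH !₂[p m, q m * k]
  · rw [abs_le]; constructor <;> linarith
  · rw [abs_le]; constructor <;> linarith

lemma chain (g : ℝ → ℝ) (d L K : ℝ) (hd : 0 < d) (hL : 0 < L) (hK : 0 ≤ K)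
    (hg : ∀ t ∈ Icc 0 d, ∀ t' ∈ Icc 0 d, |t - t'| ≤ L → |g t - g t'| ≤ K) :
    |g 0 - g d| ≤ (1 + d / L) * K := by
  obtain ⟨n, hn⟩ : ∃ n, n = ⌈d / L⌉₊ := ⟨_, rfl⟩
  have h1 : d / L ≤ n := hn ▸ Nat.le_ceil _
  have h2 : (n : ℝ) < d / L + 1 := hn ▸ Nat.ceil_lt_add_one (by positivity)
  have hn0 : (0 : ℝ) < n := lt_of_lt_of_le (by positivity) h1
  have hdn : d / n ≤ L := by
    rw [div_le_iff₀ hL] at h1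
    rw [div_le_iff₀ hn0]; linarith
  have ind : ∀ i : ℕ, i ≤ n → |g 0 - g (i * (d / n))| ≤ i * K := by
    intro i
    induction i with
    | zero => intro _; simp
    | succ i ih =>
      intro hi
      have h3 := ih (by omega)
      have mem : ∀ j : ℕ, j ≤ n → (j : ℝ) * (d / n) ∈ Icc 0 d := by
        intro j hj
        have hj' : (j : ℝ) ≤ n := by exact_mod_cast hj
        refine ⟨by positivity, ?_⟩
        calc (j : ℝ) * (d / n) ≤ n * (d / n) := by gcongr
          _ = d := by field_simp
      have h4 := hg _ (mem i (by omega)) _ (mem (i + 1) hi) (by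
        have : (i : ℝ) * (d / n) - ((i + 1 : ℕ) : ℝ) * (d / n) = - (d / n) := by push_cast; ring
        rw [this, abs_neg, abs_of_pos (by positivity)]; exact hdn)
      have h5 := abs_sub_le (g 0) (g (i * (d / n))) (g (((i + 1 : ℕ) : ℝ) * (d / n)))
      push_cast at *
      linarith
  have h6 := ind n le_rfl
  rw [mul_div_cancel₀ _ hn0.ne'] at h6
  exact h6.trans (by gcongr; linarith)

/-- If every positive harmonic function on the upper half-plane `ℍ²` satisfies the
`(s, C)`-Harnack inequality in `ℍ²`, then the Harnack metric satisfies
`h(x,y) ≤ (1 + ρ(x,y)/log((1+s)/(1-s))) log C` for all `x, y ∈ ℍ²`. -/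
theorem stmt_7 (s C : ℝ) (hs : s ∈ Ioo (0 : ℝ) 1) (hC : 1 ≤ C)
    (hH : ∀ u : EuclideanSpace ℝ (Fin 2) → ℝ,
      (∀ z ∈ upperHalfPlane2, 0 < u z) → IsHarmonicOn u upperHalfPlane2 →
      SatisfiesHarnack u upperHalfPlane2 s C)
    (x y : EuclideanSpace ℝ (Fin 2)) (hx : x ∈ upperHalfPlane2) (hy : y ∈ upperHalfPlane2) :
    harnackMetric upperHalfPlane2 x y ≤
      (1 + rhoH x y / Real.log ((1 + s) / (1 - s))) * Real.log C := by
  have hx2 : 0 < x 1 := hx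
  have hy2 : 0 < y 1 := hy
  have hK : 0 ≤ Real.log C := Real.log_nonneg hC
  have hL : 0 < Real.log ((1 + s) / (1 - s)) := by
    apply Real.log_pos
    rw [one_lt_div (by linarith [hs.2])]
    linarith [hs.1]
  have harg : 1 ≤ 1 + ‖x - y‖ ^ 2 / (2 * x 1 * y 1) := by
    have : 0 ≤ ‖x - y‖ ^ 2 / (2 * x 1 * y 1) := by positivity
    linarith
  have hrho : rhoH x y = Real.arcosh (1 + ‖x - y‖ ^ 2 / (2 * x 1 * y 1)) := rfl
  have hcosh : Real.cosh (rhoH x y) = 1 + ‖x - y‖ ^ 2 / (2 * x 1 * y 1) := by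
    rw [hrho, Real.cosh_arcosh harg]
  have hr0 : 0 ≤ rhoH x y := by
    rw [hrho]; exact Real.arcosh_nonneg harg
  refine Real.sSup_le ?_ (by positivity)
  rintro _ ⟨u, hpos, hharm, rfl⟩
  have hu := hH u hpos hharm
  rcases hr0.eq_or_lt with h0 | hd
  · have hxy : x = y := by
      rw [← h0, Real.cosh_zero] at hcosh
      have h1 : ‖x - y‖ ^ 2 / (2 * x 1 * y 1) = 0 := by linarith
      rw [div_eq_zero_iff] at h1
      rcases h1 with h1 | h1
      · exact sub_eq_zero.1 (norm_eq_zero.1 (pow_eq_zero_iff two_ne_zero |>.1 h1))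
      · exact absurd h1 (by positivity)
    subst hxy
    rw [div_self (hpos x hx).ne']
    simp only [Real.log_one, abs_zero]
    positivity
  · have hnorm : ‖x - y‖ ^ 2 = (x 0 - y 0) ^ 2 + (x 1 - y 1) ^ 2 := by
      rw [EuclideanSpace.norm_sq_eq]; simp [Fin.sum_univ_two]
    obtain ⟨p, q, hp0, hq0, hpd, hqd, hq, hpq⟩ := geod (x 0) (x 1) (y 0) (y 1) (rhoH x y) hx2 hy2 hd
      (by rw [hcosh, hnorm]; field_simp; ring)
    have hst := stepH s C hs u hu _ p q hq hpq
    have hup : ∀ t ∈ Icc 0 (rhoH x y), 0 < u !₂[p t, q t] := fun t ht =>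
      hpos _ (by simpa [upperHalfPlane2] using hq t ht)
    have hlog : ∀ t ∈ Icc 0 (rhoH x y), ∀ t' ∈ Icc 0 (rhoH x y),
        |t - t'| ≤ Real.log ((1 + s) / (1 - s)) →
        Real.log (u !₂[p t, q t]) ≤ Real.log C + Real.log (u !₂[p t', q t']) := by
      intro t ht t' ht' h
      rw [← Real.log_mul (by positivity) (hup t' ht').ne']
      exact Real.log_le_log (hup t ht) (hst t t' ht ht' h)
    have := chain (fun t => Real.log (u !₂[p t, q t])) (rhoH x y) _ (Real.log C) hd hL hK (by
      intro t ht t' ht' h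
      have h1 := hlog t ht t' ht' h
      have h2 := hlog t' ht' t ht (by rwa [abs_sub_comm])
      rw [abs_le]; constructor <;> linarith)
    have ex : (!₂[x 0, x 1] : EuclideanSpace ℝ (Fin 2)) = x := by
      ext i; fin_cases i <;> simp
    have ey : (!₂[y 0, y 1] : EuclideanSpace ℝ (Fin 2)) = y := by
      ext i; fin_cases i <;> simp
    simp only [hp0, hq0, hpd, hqd, ex, ey] at this
    rwa [Real.log_div (hpos x hx).ne' (hpos y hy).ne']
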